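/- Let d ≥ 1, β > 0, and let M(v) = (β/(2π))^{d/2} exp(−β|v|²/2) be the Maxwellian density on ℝ^d. Let ω ∈ ℂ with Re ω > 0 and let φ : ℝ^d → ℝ be measurable with C₀ := ∫_{ℝ^d} |k| φ(k)² dk < ∞ and C₁ := ∫_{ℝ^d} (1+|k|²)^{1/2} φ(k)² dk < ∞. For v₀ ∈ ℝ^d define the complex d×d matrix A(v₀) with entries A_{ab}(v₀) = ∫_{ℝ^d} k_a k_b φ(k)² ( ∫_{ℝ^d} M(v₁) / (ω + i k·(v₁ − v₀)) dv₁ ) dk. Then A is continuously differentiable on ℝ^d, and there is a constant C = C(d, β) > 0, independent of ω and φ, such that for every compactly supported smooth g : ℝ^d → ℂ, ‖ div( A ∇g ) ‖_{L²(ℝ^d)} ≤ C · ( C₀ · ‖∇²g‖_{L²(ℝ^d)} + C₁ · ‖∇g‖_{L²(ℝ^d)} ). -/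

import Mathlib

open MeasureTheory
open scoped ENNReal RealInnerProductSpace

/-- The Maxwellian density `M(v) = (β/(2π))^{d/2} exp(−β|v|²/2)` on `ℝ^d`. -/
noncomputable def maxwellian (d : ℕ) (β : ℝ) (v : EuclideanSpace ℝ (Fin d)) : ℝ :=
  (β / (2 * Real.pi)) ^ ((d : ℝ) / 2) * Real.exp (-β * ‖v‖ ^ 2 / 2)

/-- The matrix field `A(v₀)` with entries
`A_{ab}(v₀) = ∫ k_a k_b φ(k)² (∫ M(v₁)/(ω + i k·(v₁−v₀)) dv₁) dk`. -/
noncomputable def Amat (d : ℕ) (β : ℝ) (ω : ℂ) (φ : EuclideanSpace ℝ (Fin d) → ℝ)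
    (v₀ : EuclideanSpace ℝ (Fin d)) (a b : Fin d) : ℂ :=
  ∫ k : EuclideanSpace ℝ (Fin d),
    ((k a : ℝ) : ℂ) * ((k b : ℝ) : ℂ) * ((φ k : ℝ) : ℂ) ^ 2 *
      ∫ v₁, (maxwellian d β v₁ : ℂ) / (ω + Complex.I * ((⟪k, v₁ - v₀⟫ : ℝ) : ℂ))

open Complex in
/-- The time-domain kernel. -/
noncomputable def tker (d : ℕ) (β : ℝ) (ω : ℂ) (k v : EuclideanSpace ℝ (Fin d)) (t : ℝ) : ℂ :=
  Complex.exp (-ω * t + Complex.I * t * ((⟪k, v⟫ : ℝ) : ℂ) - (t : ℂ) ^ 2 * (‖k‖ : ℂ) ^ 2 / (2 * β))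

/-- Time moments of the kernel. -/
noncomputable def Gm (d : ℕ) (β : ℝ) (ω : ℂ) (m : ℕ) (k v : EuclideanSpace ℝ (Fin d)) : ℂ :=
  ∫ t in Set.Ioi (0 : ℝ), (Complex.I * t) ^ m * tker d β ω k v t

/-- The complexified inner product functional. -/
noncomputable def Lk (d : ℕ) (k : EuclideanSpace ℝ (Fin d)) : EuclideanSpace ℝ (Fin d) →L[ℝ] ℂ :=
  Complex.ofRealCLM.comp (innerSL ℝ k)

lemma Lk_apply (d : ℕ) (k v : EuclideanSpace ℝ (Fin d)) : Lk d k v = ((⟪k, v⟫ : ℝ) : ℂ) := rfl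

lemma Lk_norm (d : ℕ) (k : EuclideanSpace ℝ (Fin d)) : ‖Lk d k‖ ≤ ‖k‖ := by
  refine ContinuousLinearMap.opNorm_le_bound _ (norm_nonneg _) fun v => ?_
  rw [Lk_apply, Complex.norm_real]
  exact norm_inner_le_norm k v

lemma Lk_cont (d : ℕ) : Continuous (Lk d) := by
  unfold Lk
  fun_prop

lemma tker_norm (d : ℕ) (β : ℝ) (ω : ℂ) (k v : EuclideanSpace ℝ (Fin d)) (t : ℝ) :
    ‖tker d β ω k v t‖ = Real.exp (-ω.re * t - t ^ 2 * ‖k‖ ^ 2 / (2 * β)) := by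
  rw [tker, Complex.norm_exp]
  congr 1
  have h : -ω * (t : ℂ) + Complex.I * t * ((⟪k, v⟫ : ℝ) : ℂ) - (t : ℂ) ^ 2 * (‖k‖ : ℂ) ^ 2 / (2 * β)
      = -ω * (t : ℂ) + ((t * ⟪k, v⟫ : ℝ) : ℂ) * Complex.I
        - ((t ^ 2 * ‖k‖ ^ 2 / (2 * β) : ℝ) : ℂ) := by
    push_cast; ring
  rw [h, Complex.sub_re, Complex.add_re, Complex.ofReal_re, Complex.re_ofReal_mul]
  simp

lemma tker_cont (d : ℕ) (β : ℝ) (ω : ℂ) :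
    Continuous (fun p : (EuclideanSpace ℝ (Fin d) × EuclideanSpace ℝ (Fin d)) × ℝ =>
      tker d β ω p.1.1 p.1.2 p.2) := by
  unfold tker
  fun_prop

lemma tker_norm_le_exp (d : ℕ) {β : ℝ} (hβ : 0 < β) (ω : ℂ) (k v : EuclideanSpace ℝ (Fin d)) (t : ℝ) :
    ‖tker d β ω k v t‖ ≤ Real.exp (-ω.re * t) := by
  rw [tker_norm]
  apply Real.exp_le_exp.2
  have : 0 ≤ t ^ 2 * ‖k‖ ^ 2 / (2 * β) := by positivity
  linarith

lemma tker_norm_le_gauss (d : ℕ) {β : ℝ} {ω : ℂ} (hω : 0 < ω.re) (k v : EuclideanSpace ℝ (Fin d)) {t : ℝ}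
    (ht : 0 < t) : ‖tker d β ω k v t‖ ≤ Real.exp (-(‖k‖ ^ 2 / (2 * β)) * t ^ 2) := by
  rw [tker_norm]
  apply Real.exp_le_exp.2
  have : 0 ≤ ω.re * t := by positivity
  have h2 : -(‖k‖ ^ 2 / (2 * β)) * t ^ 2 = - (t ^ 2 * ‖k‖ ^ 2 / (2 * β)) := by ring
  rw [h2]
  linarith

lemma dom_int (m : ℕ) {c : ℝ} (hc : 0 < c) :
    Integrable (fun t : ℝ => t ^ m * Real.exp (-c * t)) (volume.restrict (Set.Ioi 0)) := by
  have h := integrableOn_rpow_mul_exp_neg_mul_rpow (p := 1) (s := m) (b := c)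
    (by have : (0:ℝ) ≤ m := Nat.cast_nonneg m
        linarith) one_pos hc
  simpa [IntegrableOn] using h

lemma integrand_norm_le (d : ℕ) {β : ℝ} (hβ : 0 < β) (ω : ℂ) (m : ℕ) (k v : EuclideanSpace ℝ (Fin d))
    {t : ℝ} (ht : 0 < t) :
    ‖(Complex.I * t) ^ m * tker d β ω k v t‖ ≤ t ^ m * Real.exp (-ω.re * t) := by
  rw [norm_mul, norm_pow, norm_mul, Complex.norm_I, one_mul, Complex.norm_real, Real.norm_of_nonneg ht.le]
  gcongr
  exact tker_norm_le_exp d hβ ω k v t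

lemma integrand_cont (d : ℕ) (β : ℝ) (ω : ℂ) (m : ℕ) :
    Continuous (fun p : (EuclideanSpace ℝ (Fin d) × EuclideanSpace ℝ (Fin d)) × ℝ =>
      (Complex.I * (p.2 : ℂ)) ^ m * tker d β ω p.1.1 p.1.2 p.2) := by
  have := tker_cont d β ω
  fun_prop

lemma integrand_int (d : ℕ) {β : ℝ} (hβ : 0 < β) {ω : ℂ} (hω : 0 < ω.re) (m : ℕ)
    (k v : EuclideanSpace ℝ (Fin d)) :
    Integrable (fun t : ℝ => (Complex.I * t) ^ m * tker d β ω k v t) (volume.restrict (Set.Ioi 0)) := by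
  refine (dom_int m hω).mono' ?_ ?_
  · exact ((integrand_cont d β ω m).comp
      (g := _) (f := fun t : ℝ => ((k, v), t)) (by fun_prop)).aestronglyMeasurable
  · filter_upwards [ae_restrict_mem measurableSet_Ioi] with t ht
    exact integrand_norm_le d hβ ω m k v ht

lemma Gm_cont (d : ℕ) {β : ℝ} (hβ : 0 < β) {ω : ℂ} (hω : 0 < ω.re) (m : ℕ) :
    Continuous (fun p : EuclideanSpace ℝ (Fin d) × EuclideanSpace ℝ (Fin d) => Gm d β ω m p.1 p.2) := by
  unfold Gm
  refine continuous_of_dominated (bound := fun t : ℝ => t ^ m * Real.exp (-ω.re * t)) ?_ ?_ (dom_int m hω) ?_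
  · intro p
    exact (integrand_int d hβ hω m p.1 p.2).aestronglyMeasurable
  · intro p
    filter_upwards [ae_restrict_mem measurableSet_Ioi] with t ht
    exact integrand_norm_le d hβ ω m p.1 p.2 ht
  · refine Filter.Eventually.of_forall fun t => ?_
    exact (integrand_cont d β ω m).comp (f := fun p => (p, t)) (by fun_prop)

lemma tker_hasFDeriv (d : ℕ) (β : ℝ) (ω : ℂ) (k v : EuclideanSpace ℝ (Fin d)) (t : ℝ) :
    HasFDerivAt (fun v => tker d β ω k v t) ((Complex.I * t * tker d β ω k v t) • Lk d k) v := by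
  have h1 : HasFDerivAt (fun v => Lk d k v) (Lk d k) v := (Lk d k).hasFDerivAt
  have h2 := ((h1.const_mul (Complex.I * t)).const_add (-ω * t)).sub_const
    ((t : ℂ) ^ 2 * (‖k‖ : ℂ) ^ 2 / (2 * β))
  have h3 := h2.cexp
  simp only [Lk_apply] at h3
  unfold tker
  rw [smul_smul, mul_comm (Complex.exp _)] at h3
  exact h3

lemma Gm_hasFDeriv (d : ℕ) {β : ℝ} (hβ : 0 < β) {ω : ℂ} (hω : 0 < ω.re)
    (k v : EuclideanSpace ℝ (Fin d)) :
    HasFDerivAt (fun v => Gm d β ω 0 k v) (Gm d β ω 1 k v • Lk d k) v := by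
  unfold Gm
  have := hasFDerivAt_integral_of_dominated_of_fderiv_le (𝕜 := ℝ) (μ := volume.restrict (Set.Ioi (0:ℝ)))
    (F := fun v t => (Complex.I * (t:ℂ)) ^ 0 * tker d β ω k v t)
    (F' := fun v t => ((Complex.I * (t:ℂ)) ^ 1 * tker d β ω k v t) • Lk d k)
    (x₀ := v) (s := Set.univ) (bound := fun t : ℝ => t ^ 1 * Real.exp (-ω.re * t) * ‖k‖) Filter.univ_mem
    (Filter.Eventually.of_forall fun v => (integrand_int d hβ hω 0 k v).aestronglyMeasurable)
    (integrand_int d hβ hω 0 k v)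
    ((integrand_int d hβ hω 1 k v).smul_const _).aestronglyMeasurable ?_ ((dom_int 1 hω).mul_const _) ?_
  · rwa [integral_smul_const] at this
  · filter_upwards [ae_restrict_mem measurableSet_Ioi] with t ht x _
    rw [norm_smul]
    exact mul_le_mul (integrand_norm_le d hβ ω 1 k x ht) (Lk_norm d k) (norm_nonneg _)
      (mul_nonneg (pow_nonneg (le_of_lt ht) _) (Real.exp_pos _).le)
  · refine Filter.Eventually.of_forall fun t x _ => ?_
    simpa using tker_hasFDeriv d β ω k x t

lemma Gm0_bound (d : ℕ) {β : ℝ} (hβ : 0 < β) {ω : ℂ} (hω : 0 < ω.re)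
    (k v : EuclideanSpace ℝ (Fin d)) :
    ‖k‖ * ‖Gm d β ω 0 k v‖ ≤ Real.sqrt (2 * Real.pi * β) / 2 := by
  rcases eq_or_ne k 0 with rfl | hk
  · simp; positivity
  have hk' : 0 < ‖k‖ := norm_pos_iff.2 hk
  have hb : 0 < ‖k‖ ^ 2 / (2 * β) := by positivity
  have h : ‖Gm d β ω 0 k v‖ ≤ Real.sqrt (Real.pi / (‖k‖ ^ 2 / (2 * β))) / 2 := by
    rw [← integral_gaussian_Ioi, Gm]
    refine norm_integral_le_of_norm_le ((integrable_exp_neg_mul_sq hb).integrableOn) ?_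
    filter_upwards [ae_restrict_mem measurableSet_Ioi] with t ht
    simpa using tker_norm_le_gauss d (β := β) hω k v ht
  have e : Real.sqrt (Real.pi / (‖k‖ ^ 2 / (2 * β))) = Real.sqrt (2 * Real.pi * β) / ‖k‖ := by
    rw [show Real.pi / (‖k‖ ^ 2 / (2 * β)) = (2 * Real.pi * β) / ‖k‖ ^ 2 by field_simp,
      Real.sqrt_div (by positivity), Real.sqrt_sq hk'.le]
  rw [e] at h
  calc _ ≤ ‖k‖ * (Real.sqrt (2 * Real.pi * β) / ‖k‖ / 2) := by gcongr
    _ = _ := by field_simp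

lemma Gm1_bound (d : ℕ) {β : ℝ} (hβ : 0 < β) {ω : ℂ} (hω : 0 < ω.re)
    (k v : EuclideanSpace ℝ (Fin d)) :
    ‖k‖ ^ 2 * ‖Gm d β ω 1 k v‖ ≤ β := by
  rcases eq_or_ne k 0 with rfl | hk
  · simp; positivity
  have hk' : 0 < ‖k‖ := norm_pos_iff.2 hk
  have hb : 0 < ‖k‖ ^ 2 / (2 * β) := by positivity
  have hI : ∫ t in Set.Ioi (0:ℝ), t * Real.exp (-(‖k‖ ^ 2 / (2 * β)) * t ^ 2)
      = (2 * (‖k‖ ^ 2 / (2 * β)))⁻¹ := by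
    have := integral_mul_cexp_neg_mul_sq (b := ((‖k‖ ^ 2 / (2 * β) : ℝ) : ℂ)) (by rwa [Complex.ofReal_re])
    apply Complex.ofReal_injective
    rw [← integral_complex_ofReal]
    push_cast at this ⊢
    exact this
  have h : ‖Gm d β ω 1 k v‖ ≤ (2 * (‖k‖ ^ 2 / (2 * β)))⁻¹ := by
    rw [← hI, Gm]
    refine norm_integral_le_of_norm_le ((integrable_mul_exp_neg_mul_sq hb).integrableOn) ?_
    filter_upwards [ae_restrict_mem measurableSet_Ioi] with t ht
    have ht' : 0 < t := ht
    rw [norm_mul, pow_one, norm_mul, Complex.norm_I, one_mul, Complex.norm_real, Real.norm_of_nonneg ht'.le]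
    exact mul_le_mul_of_nonneg_left (tker_norm_le_gauss d (β := β) hω k v ht) ht'.le
  calc _ ≤ ‖k‖ ^ 2 * (2 * (‖k‖ ^ 2 / (2 * β)))⁻¹ := by gcongr
    _ = β := by field_simp

lemma maxw_int (d : ℕ) {β : ℝ} (hβ : 0 < β) :
    Integrable (fun v : EuclideanSpace ℝ (Fin d) => (maxwellian d β v : ℂ)) := by
  have h := GaussianFourier.integrable_cexp_neg_mul_sq_norm_add (V := EuclideanSpace ℝ (Fin d)) (b := ((β / 2 : ℝ) : ℂ))
    (by rw [Complex.ofReal_re]; positivity) 0 0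
  refine (h.const_mul (((β / (2 * Real.pi)) ^ ((d : ℝ) / 2) : ℝ) : ℂ)).congr (Filter.Eventually.of_forall fun v => ?_)
  simp only [maxwellian]
  push_cast
  congr 2
  ring

lemma maxw_fourier (d : ℕ) {β : ℝ} (hβ : 0 < β) (k : EuclideanSpace ℝ (Fin d)) (t : ℝ) :
    ∫ v : EuclideanSpace ℝ (Fin d), (maxwellian d β v : ℂ) * Complex.exp (-Complex.I * t * ((⟪k, v⟫ : ℝ) : ℂ))
      = Complex.exp (- ((t : ℂ) ^ 2 * (‖k‖ : ℂ) ^ 2 / (2 * β))) := by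
  have h := GaussianFourier.integral_cexp_neg_mul_sq_norm_add (V := EuclideanSpace ℝ (Fin d)) (b := ((β / 2 : ℝ) : ℂ))
    (by rw [Complex.ofReal_re]; positivity) (-Complex.I * t) k
  have e : ∀ v : EuclideanSpace ℝ (Fin d),
      (maxwellian d β v : ℂ) * Complex.exp (-Complex.I * t * ((⟪k, v⟫ : ℝ) : ℂ)) =
      (((β / (2 * Real.pi)) ^ ((d : ℝ) / 2) : ℝ) : ℂ) *
        Complex.exp (-((β / 2 : ℝ) : ℂ) * ‖v‖ ^ 2 + -Complex.I * t * ((⟪k, v⟫ : ℝ) : ℂ)) := by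
    intro v
    rw [Complex.exp_add, ← mul_assoc]
    simp only [maxwellian]
    push_cast
    congr 3
    ring
  simp_rw [e]
  rw [integral_const_mul, h, ← mul_assoc]
  have hpi := Real.pi_pos
  have e2 : ((Real.pi : ℂ) / ((β / 2 : ℝ) : ℂ)) ^ ((Module.finrank ℝ (EuclideanSpace ℝ (Fin d)) : ℂ) / 2)
      = (((Real.pi / (β / 2)) ^ ((d : ℝ) / 2) : ℝ) : ℂ) := by
    rw [Complex.ofReal_cpow (by positivity)]
    simp
  rw [e2, ← Complex.ofReal_mul, ← Real.mul_rpow (by positivity) (by positivity)]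
  rw [show β / (2 * Real.pi) * (Real.pi / (β / 2)) = 1 by field_simp, Real.one_rpow]
  have hβc : (β : ℂ) ≠ 0 := by exact_mod_cast hβ.ne'
  simp only [Complex.ofReal_one, one_mul]
  congr 1
  push_cast
  rw [mul_pow, neg_sq, Complex.I_sq]
  field_simp
  ring

lemma inner_eq (d : ℕ) {β : ℝ} (hβ : 0 < β) {ω : ℂ} (hω : 0 < ω.re) (k v₀ : EuclideanSpace ℝ (Fin d)) :
    ∫ v₁, (maxwellian d β v₁ : ℂ) / (ω + Complex.I * ((⟪k, v₁ - v₀⟫ : ℝ) : ℂ)) = Gm d β ω 0 k v₀ := by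
  have h1 : ∀ v₁ : EuclideanSpace ℝ (Fin d),
      (maxwellian d β v₁ : ℂ) / (ω + Complex.I * ((⟪k, v₁ - v₀⟫ : ℝ) : ℂ)) =
      ∫ t in Set.Ioi (0:ℝ), (maxwellian d β v₁ : ℂ) *
        Complex.exp (-(ω + Complex.I * ((⟪k, v₁ - v₀⟫ : ℝ) : ℂ)) * t) := by
    intro v₁
    rw [integral_const_mul, integral_exp_mul_complex_Ioi (by simpa using hω)]
    simp only [Complex.ofReal_zero, mul_zero, Complex.exp_zero]
    rw [neg_div_neg_eq, mul_one_div]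
  simp_rw [h1]
  rw [integral_integral_swap]
  · unfold Gm
    refine integral_congr_ae (Filter.Eventually.of_forall fun t => ?_)
    simp only [pow_zero, one_mul]
    have e : ∀ v₁ : EuclideanSpace ℝ (Fin d), (maxwellian d β v₁ : ℂ) *
        Complex.exp (-(ω + Complex.I * ((⟪k, v₁ - v₀⟫ : ℝ) : ℂ)) * t) =
        Complex.exp (-ω * t + Complex.I * t * ((⟪k, v₀⟫ : ℝ) : ℂ)) *
        ((maxwellian d β v₁ : ℂ) * Complex.exp (-Complex.I * t * ((⟪k, v₁⟫ : ℝ) : ℂ))) := by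
      intro v₁
      rw [mul_left_comm, ← Complex.exp_add, inner_sub_right]
      push_cast
      congr 2
      ring
    simp_rw [e]
    rw [integral_const_mul, maxw_fourier d hβ, ← Complex.exp_add, tker, sub_eq_add_neg]
  · have hi := (maxw_int d hβ).mul_prod ((dom_int 0 hω).ofReal (𝕜 := ℂ))
    have hm : Continuous (fun v : EuclideanSpace ℝ (Fin d) => maxwellian d β v) := by
      unfold maxwellian; fun_prop
    refine hi.mono ?_ ?_
    · apply Continuous.aestronglyMeasurable
      unfold Function.uncurry
      fun_prop
    · refine Filter.Eventually.of_forall fun p => ?_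
      simp only [Function.uncurry, norm_mul]
      simp [Complex.norm_exp]

/-- The coefficient `k_a k_b φ(k)²`. -/
noncomputable def cf (d : ℕ) (φ : EuclideanSpace ℝ (Fin d) → ℝ) (a b : Fin d)
    (k : EuclideanSpace ℝ (Fin d)) : ℂ :=
  ((k a : ℝ) : ℂ) * ((k b : ℝ) : ℂ) * ((φ k : ℝ) : ℂ) ^ 2

lemma cf_norm (d : ℕ) (φ : EuclideanSpace ℝ (Fin d) → ℝ) (a b : Fin d)
    (k : EuclideanSpace ℝ (Fin d)) : ‖cf d φ a b k‖ ≤ ‖k‖ ^ 2 * φ k ^ 2 := by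
  rw [cf, norm_mul, norm_mul, norm_pow, Complex.norm_real, Complex.norm_real, Complex.norm_real,
    Real.norm_eq_abs (φ k), sq_abs, sq ‖k‖]
  gcongr <;> exact PiLp.norm_apply_le k _

lemma cf_meas (d : ℕ) {φ : EuclideanSpace ℝ (Fin d) → ℝ} (hφ : Measurable φ) (a b : Fin d) :
    Measurable (cf d φ a b) := by
  unfold cf
  fun_prop

lemma Amat_eq (d : ℕ) {β : ℝ} (hβ : 0 < β) {ω : ℂ} (hω : 0 < ω.re)
    (φ : EuclideanSpace ℝ (Fin d) → ℝ) (a b : Fin d) :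
    (fun v => Amat d β ω φ v a b) = fun v => ∫ k, cf d φ a b k * Gm d β ω 0 k v := by
  funext v
  unfold Amat
  simp_rw [inner_eq d hβ hω]
  rfl

lemma F0_bound (d : ℕ) {β : ℝ} (hβ : 0 < β) {ω : ℂ} (hω : 0 < ω.re)
    (φ : EuclideanSpace ℝ (Fin d) → ℝ) (a b : Fin d) (k v : EuclideanSpace ℝ (Fin d)) :
    ‖cf d φ a b k * Gm d β ω 0 k v‖ ≤ Real.sqrt (2 * Real.pi * β) / 2 * (‖k‖ * φ k ^ 2) := by
  rw [norm_mul]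
  calc _ ≤ ‖k‖ ^ 2 * φ k ^ 2 * ‖Gm d β ω 0 k v‖ := by gcongr; exact cf_norm d φ a b k
    _ = (‖k‖ * ‖Gm d β ω 0 k v‖) * (‖k‖ * φ k ^ 2) := by ring
    _ ≤ _ := by gcongr; exact Gm0_bound d hβ hω k v

lemma F1_bound (d : ℕ) {β : ℝ} (hβ : 0 < β) {ω : ℂ} (hω : 0 < ω.re)
    (φ : EuclideanSpace ℝ (Fin d) → ℝ) (a b : Fin d) (k v : EuclideanSpace ℝ (Fin d)) :
    ‖(cf d φ a b k * Gm d β ω 1 k v) • Lk d k‖ ≤ β * (‖k‖ * φ k ^ 2) := by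
  rw [norm_smul, norm_mul]
  calc _ ≤ ‖k‖ ^ 2 * φ k ^ 2 * ‖Gm d β ω 1 k v‖ * ‖k‖ := by
        gcongr
        · exact cf_norm d φ a b k
        · exact Lk_norm d k
    _ = (‖k‖ ^ 2 * ‖Gm d β ω 1 k v‖) * (‖k‖ * φ k ^ 2) := by ring
    _ ≤ _ := by gcongr; exact Gm1_bound d hβ hω k v

lemma F_meas (d : ℕ) {β : ℝ} (hβ : 0 < β) {ω : ℂ} (hω : 0 < ω.re)
    {φ : EuclideanSpace ℝ (Fin d) → ℝ} (hφ : Measurable φ) (a b : Fin d) (m : ℕ)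
    (v : EuclideanSpace ℝ (Fin d)) :
    AEStronglyMeasurable (fun k => cf d φ a b k * Gm d β ω m k v) volume := by
  refine (cf_meas d hφ a b).aestronglyMeasurable.mul ?_
  exact ((Gm_cont d hβ hω m).comp (f := fun k => (k, v)) (by fun_prop)).aestronglyMeasurable

lemma Amat_hasFDeriv (d : ℕ) {β : ℝ} (hβ : 0 < β) {ω : ℂ} (hω : 0 < ω.re)
    {φ : EuclideanSpace ℝ (Fin d) → ℝ} (hφ : Measurable φ)
    (hi : Integrable (fun k : EuclideanSpace ℝ (Fin d) => ‖k‖ * (φ k) ^ 2)) (a b : Fin d)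
    (v : EuclideanSpace ℝ (Fin d)) :
    HasFDerivAt (fun v => Amat d β ω φ v a b)
      (∫ k, (cf d φ a b k * Gm d β ω 1 k v) • Lk d k) v := by
  rw [Amat_eq d hβ hω]
  refine hasFDerivAt_integral_of_dominated_of_fderiv_le (𝕜 := ℝ)
    (F := fun v k => cf d φ a b k * Gm d β ω 0 k v)
    (F' := fun v k => (cf d φ a b k * Gm d β ω 1 k v) • Lk d k)
    (s := Set.univ) (bound := fun k => β * (‖k‖ * φ k ^ 2)) Filter.univ_mem
    (Filter.Eventually.of_forall fun v => F_meas d hβ hω hφ a b 0 v) ?_ ?_ ?_ (hi.const_mul _) ?_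
  · exact (hi.const_mul _).mono' (F_meas d hβ hω hφ a b 0 v)
      (Filter.Eventually.of_forall fun k => F0_bound d hβ hω φ a b k v)
  · exact (F_meas d hβ hω hφ a b 1 v).smul (Lk_cont d).aestronglyMeasurable
  · exact Filter.Eventually.of_forall fun k x _ => F1_bound d hβ hω φ a b k x
  · refine Filter.Eventually.of_forall fun k x _ => ?_
    have := (Gm_hasFDeriv d hβ hω k x).const_mul (cf d φ a b k)
    rwa [smul_smul] at this

lemma Amat_fderiv_cont (d : ℕ) {β : ℝ} (hβ : 0 < β) {ω : ℂ} (hω : 0 < ω.re)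
    {φ : EuclideanSpace ℝ (Fin d) → ℝ} (hφ : Measurable φ)
    (hi : Integrable (fun k : EuclideanSpace ℝ (Fin d) => ‖k‖ * (φ k) ^ 2)) (a b : Fin d) :
    Continuous (fun v => ∫ k, (cf d φ a b k * Gm d β ω 1 k v) • Lk d k) := by
  refine continuous_of_dominated (bound := fun k => β * (‖k‖ * φ k ^ 2)) ?_ ?_ (hi.const_mul _) ?_
  · exact fun v => (F_meas d hβ hω hφ a b 1 v).smul (Lk_cont d).aestronglyMeasurable
  · exact fun v => Filter.Eventually.of_forall fun k => F1_bound d hβ hω φ a b k v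
  · refine Filter.Eventually.of_forall fun k => ?_
    have : Continuous (fun v => Gm d β ω 1 k v) :=
      (Gm_cont d hβ hω 1).comp (f := fun v => (k, v)) (by fun_prop)
    exact (this.const_mul _).smul continuous_const

lemma Amat_bound (d : ℕ) {β : ℝ} (hβ : 0 < β) {ω : ℂ} (hω : 0 < ω.re)
    {φ : EuclideanSpace ℝ (Fin d) → ℝ}
    (hi : Integrable (fun k : EuclideanSpace ℝ (Fin d) => ‖k‖ * (φ k) ^ 2)) (a b : Fin d)
    (v : EuclideanSpace ℝ (Fin d)) :
    ‖Amat d β ω φ v a b‖ ≤ Real.sqrt (2 * Real.pi * β) / 2 *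
      ∫ k : EuclideanSpace ℝ (Fin d), ‖k‖ * (φ k) ^ 2 := by
  rw [congrFun (Amat_eq d hβ hω φ a b) v, ← integral_const_mul]
  exact norm_integral_le_of_norm_le (hi.const_mul _)
    (Filter.Eventually.of_forall fun k => F0_bound d hβ hω φ a b k v)

lemma Amat_fderiv_bound (d : ℕ) {β : ℝ} (hβ : 0 < β) {ω : ℂ} (hω : 0 < ω.re)
    {φ : EuclideanSpace ℝ (Fin d) → ℝ}
    (hi : Integrable (fun k : EuclideanSpace ℝ (Fin d) => ‖k‖ * (φ k) ^ 2)) (a b : Fin d)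
    (v : EuclideanSpace ℝ (Fin d)) :
    ‖∫ k, (cf d φ a b k * Gm d β ω 1 k v) • Lk d k‖ ≤ β *
      ∫ k : EuclideanSpace ℝ (Fin d), ‖k‖ * (φ k) ^ 2 := by
  rw [← integral_const_mul]
  exact norm_integral_le_of_norm_le (hi.const_mul _)
    (Filter.Eventually.of_forall fun k => F1_bound d hβ hω φ a b k v)

lemma term_bound (d : ℕ) {A : EuclideanSpace ℝ (Fin d) → ℂ} {A' : EuclideanSpace ℝ (Fin d) →L[ℝ] ℂ}
    {v : EuclideanSpace ℝ (Fin d)} (hA : HasFDerivAt A A' v)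
    {g : EuclideanSpace ℝ (Fin d) → ℂ} (hg : ContDiff ℝ (⊤ : ℕ∞) g) (a b : Fin d) {K0 K1 : ℝ}
    (h0 : ‖A v‖ ≤ K0) (h1 : ‖A'‖ ≤ K1) :
    ‖fderiv ℝ (fun w => A w * fderiv ℝ g w (EuclideanSpace.single b 1)) v (EuclideanSpace.single a 1)‖
      ≤ K0 * ‖iteratedFDeriv ℝ 2 g v‖ + K1 * ‖fderiv ℝ g v‖ := by
  have hd1 : Differentiable ℝ (fderiv ℝ g) :=
    (hg.fderiv_right (m := 1) (by norm_cast)).differentiable (by norm_num)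
  have hB : HasFDerivAt (fun w => fderiv ℝ g w (EuclideanSpace.single b 1))
      ((fderiv ℝ (fderiv ℝ g) v).flip (EuclideanSpace.single b 1)) v := by
    have := (hd1 v).hasFDerivAt.clm_apply (hasFDerivAt_const (EuclideanSpace.single b (1:ℝ)) v)
    simpa using this
  rw [show fderiv ℝ (fun w => A w * fderiv ℝ g w (EuclideanSpace.single b 1)) v = _ from (hA.mul hB).fderiv]
  have e2 : fderiv ℝ (fderiv ℝ g) v (EuclideanSpace.single a 1) (EuclideanSpace.single b 1)
      = iteratedFDeriv ℝ 2 g v ![EuclideanSpace.single a 1, EuclideanSpace.single b 1] := by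
    rw [iteratedFDeriv_two_apply]; simp
  have n2 : ‖fderiv ℝ (fderiv ℝ g) v (EuclideanSpace.single a 1) (EuclideanSpace.single b 1)‖
      ≤ ‖iteratedFDeriv ℝ 2 g v‖ := by
    rw [e2]
    refine (ContinuousMultilinearMap.le_opNorm _ _).trans ?_
    simp [Fin.prod_univ_two]
  have n1 : ‖fderiv ℝ g v (EuclideanSpace.single b 1)‖ ≤ ‖fderiv ℝ g v‖ := by
    simpa using (fderiv ℝ g v).le_opNorm (EuclideanSpace.single b 1)
  have n3 : ‖A' (EuclideanSpace.single a 1)‖ ≤ K1 := by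
    refine le_trans ?_ h1
    simpa using A'.le_opNorm (EuclideanSpace.single a 1)
  simp only [ContinuousLinearMap.add_apply, ContinuousLinearMap.smul_apply,
    ContinuousLinearMap.flip_apply, smul_eq_mul]
  refine (norm_add_le _ _).trans ?_
  have K0n := (norm_nonneg _).trans h0
  have K1n := (norm_nonneg _).trans h1
  rw [norm_mul]
  refine add_le_add (mul_le_mul h0 n2 (norm_nonneg _) K0n) ?_
  first
    | (rw [norm_mul, mul_comm]; exact mul_le_mul n3 n1 (norm_nonneg _) K1n)
    | (simp only [MulOpposite.smul_eq_mul_unop, MulOpposite.unop_op]; rw [norm_mul]; exact mul_le_mul n3 n1 (norm_nonneg _) K1n)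

/-- The matrix field `A` is `C¹` and the 'hat operator' `g ↦ div(A ∇g)` is controlled by
two velocity derivatives: `‖div(A∇g)‖₂ ≤ C (C₀ ‖∇²g‖₂ + C₁ ‖∇g‖₂)`, uniformly in the
spectral parameter `ω` (with `Re ω > 0`) and in `φ`. -/
theorem stmt10 (d : ℕ) (hd : 1 ≤ d) (β : ℝ) (hβ : 0 < β) :
    ∃ C : ℝ, 0 < C ∧
      ∀ (ω : ℂ), 0 < ω.re →
      ∀ (φ : EuclideanSpace ℝ (Fin d) → ℝ), Measurable φ →
        Integrable (fun k : EuclideanSpace ℝ (Fin d) => ‖k‖ * (φ k) ^ 2) →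
        Integrable (fun k : EuclideanSpace ℝ (Fin d) => Real.sqrt (1 + ‖k‖ ^ 2) * (φ k) ^ 2) →
        (∀ a b : Fin d, ContDiff ℝ 1 (fun v₀ => Amat d β ω φ v₀ a b)) ∧
        ∀ g : EuclideanSpace ℝ (Fin d) → ℂ,
          ContDiff ℝ (⊤ : ℕ∞) g → HasCompactSupport g →
          (eLpNorm (fun v₀ => ∑ a : Fin d, ∑ b : Fin d,
              fderiv ℝ (fun w => Amat d β ω φ w a b * fderiv ℝ g w (EuclideanSpace.single b 1))
                v₀ (EuclideanSpace.single a 1)) 2 volume).toReal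
            ≤ C * ((∫ k : EuclideanSpace ℝ (Fin d), ‖k‖ * (φ k) ^ 2) *
                  (eLpNorm (iteratedFDeriv ℝ 2 g) 2 volume).toReal
                + (∫ k : EuclideanSpace ℝ (Fin d), Real.sqrt (1 + ‖k‖ ^ 2) * (φ k) ^ 2) *
                  (eLpNorm (fderiv ℝ g) 2 volume).toReal) := by
  have hK0 : 0 ≤ Real.sqrt (2 * Real.pi * β) / 2 := by positivity
  have hdpos : (0:ℝ) < d := by exact_mod_cast hd
  refine ⟨(d:ℝ) * d * (Real.sqrt (2 * Real.pi * β) / 2 + β), by positivity, ?_⟩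
  intro ω hω φ hφ hi hi1
  refine ⟨fun a b => contDiff_one_iff_hasFDerivAt.2 ⟨_, Amat_fderiv_cont d hβ hω hφ hi a b,
    Amat_hasFDeriv d hβ hω hφ hi a b⟩, ?_⟩
  intro g hg hgc
  set C0 := ∫ k : EuclideanSpace ℝ (Fin d), ‖k‖ * (φ k) ^ 2 with hC0
  set C1 := ∫ k : EuclideanSpace ℝ (Fin d), Real.sqrt (1 + ‖k‖ ^ 2) * (φ k) ^ 2 with hC1
  set K0 := Real.sqrt (2 * Real.pi * β) / 2 with hK0d
  have hC0n : 0 ≤ C0 := integral_nonneg fun k => by positivity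
  have hC01 : C0 ≤ C1 := by
    refine integral_mono hi hi1 fun k => ?_
    dsimp only
    gcongr
    apply Real.le_sqrt_of_sq_le
    linarith
  have m2 : MemLp (iteratedFDeriv ℝ 2 g) 2 volume :=
    (hg.continuous_iteratedFDeriv (by norm_cast)).memLp_of_hasCompactSupport
      (hgc.iteratedFDeriv 2)
  have m1 : MemLp (fderiv ℝ g) 2 volume :=
    (hg.continuous_fderiv (by norm_num)).memLp_of_hasCompactSupport (hgc.fderiv (𝕜 := ℝ))
  have hpt : ∀ v₀, ‖∑ a : Fin d, ∑ b : Fin d,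
      fderiv ℝ (fun w => Amat d β ω φ w a b * fderiv ℝ g w (EuclideanSpace.single b 1))
        v₀ (EuclideanSpace.single a 1)‖ ≤
      ((d:ℝ) * d * (K0 * C0)) * ‖iteratedFDeriv ℝ 2 g v₀‖ + ((d:ℝ) * d * (β * C0)) * ‖fderiv ℝ g v₀‖ := by
    intro v₀
    refine (norm_sum_le_of_le _ fun a _ => norm_sum_le_of_le _ fun b _ =>
      term_bound d (Amat_hasFDeriv d hβ hω hφ hi a b v₀) hg a b
        (Amat_bound d hβ hω hi a b v₀) (Amat_fderiv_bound d hβ hω hi a b v₀)).trans (le_of_eq ?_)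
    simp only [Finset.sum_const, Finset.card_univ, Fintype.card_fin, nsmul_eq_mul]
    ring
  have h1 := eLpNorm_mono_real (p := 2) (μ := volume) hpt
  have M2 := m2.norm.const_mul ((d:ℝ) * d * (K0 * C0))
  have M1 := m1.norm.const_mul ((d:ℝ) * d * (β * C0))
  have h2 := eLpNorm_add_le (p := 2) M2.aestronglyMeasurable M1.aestronglyMeasurable (by norm_num)
  have h3 : ∀ {F : Type} [NormedAddCommGroup F] (c : ℝ) (f : EuclideanSpace ℝ (Fin d) → F), 0 ≤ c →
      (eLpNorm (fun v => c * ‖f v‖) 2 volume).toReal = c * (eLpNorm f 2 volume).toReal := by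
    intro F _ c f hc
    have := eLpNorm_const_smul c (fun v => ‖f v‖) 2 (volume : Measure (EuclideanSpace ℝ (Fin d)))
    rw [eLpNorm_norm] at this
    have e : (fun v => c * ‖f v‖) = c • fun v => ‖f v‖ := by ext; simp
    rw [e, this, ENNReal.toReal_mul]
    simp [abs_of_nonneg hc]
  have h4 := ENNReal.toReal_mono (ENNReal.add_ne_top.2 ⟨M2.eLpNorm_ne_top, M1.eLpNorm_ne_top⟩) (h1.trans h2)
  rw [ENNReal.toReal_add M2.eLpNorm_ne_top M1.eLpNorm_ne_top, h3 _ _ (by positivity), h3 _ _ (by positivity)] at h4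
  refine h4.trans ?_
  set X := (eLpNorm (iteratedFDeriv ℝ 2 g) 2 volume).toReal
  set Y := (eLpNorm (fderiv ℝ g) 2 volume).toReal
  have hX : 0 ≤ X := ENNReal.toReal_nonneg
  have hY : 0 ≤ Y := ENNReal.toReal_nonneg
  have hC1n : 0 ≤ C1 := hC0n.trans hC01
  calc (d:ℝ) * d * (K0 * C0) * X + (d:ℝ) * d * (β * C0) * Y
      ≤ (d:ℝ) * d * ((K0 + β) * C0) * X + (d:ℝ) * d * ((K0 + β) * C1) * Y := by
        gcongr <;> linarith
    _ = _ := by ring
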